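/- Let r(u) = 2cosh²u and z(u) = 4 sinh u, let I be an interval contained in (0, ∞), and let ψ : ℝ → ℝ be twice differentiable on I with 0 < ψ(u) < 1, ψ'(u) < 0 and ψ''(u) < 0 for all u ∈ I. Then the function ρ := r·ψ satisfies, for every u ∈ I: ρ(u)·(ρ'(u)·z''(u) − ρ''(u)·z'(u)) + 2·z'(u)·(ρ'(u)² + z'(u)²) > 0. -/

import Mathlib

open Real Set

/-!
Write `c = cosh u`, `s = sinh u` and `a = s ψ(u)`, `b = c ψ'(u)`. After the factor `16 c³ > 0` is
split off, the quantity in question becomes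
`(6 a² + 5 a b + 2 b²) + 2 (4 - ψ²) - c² ψ ψ''`.
The quadratic form has discriminant `5² - 4 · 6 · 2 < 0`, so it is nonnegative; `0 ≤ ψ < 2` makes
the second term positive, and concavity makes the last one nonnegative.
-/

open scoped Topology

section Calculus

variable {𝕜 : Type*} [NontriviallyNormedField 𝕜]

theorem eventually_differentiableAt_of_deriv_ne_zero {F : Type*} [NormedAddCommGroup F]
    [NormedSpace 𝕜 F] {f : 𝕜 → F} {x : 𝕜} (hf : ContinuousAt (deriv f) x) (hx : deriv f x ≠ 0) :
    ∀ᶠ w in 𝓝 x, DifferentiableAt 𝕜 f w :=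
  (hf.eventually_ne hx).mono fun _ => differentiableAt_of_deriv_ne_zero

theorem deriv_deriv_fun_mul {𝔸 : Type*} [NormedRing 𝔸] [NormedAlgebra 𝕜 𝔸] {f g : 𝕜 → 𝔸} {x : 𝕜}
    (hf : ∀ᶠ w in 𝓝 x, DifferentiableAt 𝕜 f w) (hf' : DifferentiableAt 𝕜 (deriv f) x)
    (hg : ∀ᶠ w in 𝓝 x, DifferentiableAt 𝕜 g w) (hg' : DifferentiableAt 𝕜 (deriv g) x) :
    deriv (deriv fun w => f w * g w) x =
      deriv (deriv f) x * g x + 2 * (deriv f x * deriv g x) + f x * deriv (deriv g) x := by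
  have product_rule : (deriv fun w => f w * g w) =ᶠ[𝓝 x]
      fun w => deriv f w * g w + f w * deriv g w := by
    filter_upwards [hf, hg] with w hfw hgw using deriv_fun_mul hfw hgw
  have hfx := hf.self_of_nhds
  have hgx := hg.self_of_nhds
  rw [product_rule.deriv_eq, deriv_fun_add (hf'.fun_mul hgx) (hfx.fun_mul hg'),
    deriv_fun_mul hf' hgx, deriv_fun_mul hfx hg', two_mul]
  abel

end Calculus

/-- The numerator `ρ (ρ'² + z'²)^{3/2} H` of the mean curvature `H`, with respect to the outward
normal, of the hypersurface of `ℝ⁴` swept out by rotating the curve `(ρ, z)` about the `x₄`-axis.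
It has the sign of `H` wherever `ρ > 0` and the curve is regular, and avoids the division by `ρ`
and by the speed. -/
noncomputable def revolutionMeanCurvatureNumerator (ρ z : ℝ → ℝ) (u : ℝ) : ℝ :=
  ρ u * (deriv ρ u * deriv (deriv z) u - deriv (deriv ρ) u * deriv z u)
    + 2 * deriv z u * (deriv ρ u ^ 2 + deriv z u ^ 2)

/-- The radius `r` of the scalar-flat paraboloidal neck `r = 2 + z² / 8`, in the parameter `u`
for which `z = 4 sinh u`. -/
noncomputable def paraboloidRadius (u : ℝ) : ℝ := 2 * cosh u ^ 2

/-- The height `z` of the scalar-flat paraboloidal neck along the axis of rotation. -/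
noncomputable def paraboloidHeight (u : ℝ) : ℝ := 4 * sinh u

theorem hasDerivAt_paraboloidRadius (u : ℝ) :
    HasDerivAt paraboloidRadius (4 * (cosh u * sinh u)) u := by
  refine (((hasDerivAt_cosh u).fun_pow 2).const_mul 2).congr_deriv ?_
  ring

theorem deriv_paraboloidRadius : deriv paraboloidRadius = fun u => 4 * (cosh u * sinh u) :=
  deriv_eq hasDerivAt_paraboloidRadius

theorem hasDerivAt_deriv_paraboloidRadius (u : ℝ) :
    HasDerivAt (deriv paraboloidRadius) (4 * (sinh u ^ 2 + cosh u ^ 2)) u := by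
  rw [deriv_paraboloidRadius]
  refine (((hasDerivAt_cosh u).fun_mul (hasDerivAt_sinh u)).const_mul 4).congr_deriv ?_
  ring

theorem deriv_paraboloidHeight : deriv paraboloidHeight = fun u => 4 * cosh u :=
  deriv_eq fun u => (hasDerivAt_sinh u).const_mul 4

theorem deriv_deriv_paraboloidHeight (u : ℝ) :
    deriv (deriv paraboloidHeight) u = 4 * sinh u := by
  rw [deriv_paraboloidHeight]
  exact ((hasDerivAt_cosh u).const_mul 4).deriv

theorem revolutionMeanCurvatureNumerator_bent_paraboloid {ψ : ℝ → ℝ} {u : ℝ}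
    (hψ : ∀ᶠ w in 𝓝 u, DifferentiableAt ℝ ψ w) (hψ' : DifferentiableAt ℝ (deriv ψ) u) :
    revolutionMeanCurvatureNumerator (fun w => paraboloidRadius w * ψ w) paraboloidHeight u =
      16 * cosh u ^ 3 *
        (6 * (sinh u * ψ u) ^ 2 + 5 * (sinh u * ψ u) * (cosh u * deriv ψ u)
          + 2 * (cosh u * deriv ψ u) ^ 2 + 2 * (4 - ψ u ^ 2)
          - cosh u ^ 2 * (ψ u * deriv (deriv ψ) u)) := by
  have hr : ∀ w, DifferentiableAt ℝ paraboloidRadius w := fun w =>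
    (hasDerivAt_paraboloidRadius w).differentiableAt
  have hr' := hasDerivAt_deriv_paraboloidRadius u
  rw [revolutionMeanCurvatureNumerator, deriv_fun_mul (hr u) hψ.self_of_nhds,
    deriv_deriv_fun_mul (.of_forall hr) hr'.differentiableAt hψ hψ', hr'.deriv,
    deriv_paraboloidRadius, deriv_deriv_paraboloidHeight, deriv_paraboloidHeight,
    paraboloidRadius]
  linear_combination (-32) * cosh u ^ 3 * ψ u ^ 2 * cosh_sq u

theorem bent_paraboloid_mean_convex_general {ψ : ℝ → ℝ} {u : ℝ}
    (hψ : ∀ᶠ w in 𝓝 u, DifferentiableAt ℝ ψ w) (hψ' : DifferentiableAt ℝ (deriv ψ) u)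
    (hψ_nonneg : 0 ≤ ψ u) (hψ_lt : ψ u < 2) (hψ_conc : deriv (deriv ψ) u ≤ 0) :
    0 < revolutionMeanCurvatureNumerator (fun w => paraboloidRadius w * ψ w)
      paraboloidHeight u := by
  rw [revolutionMeanCurvatureNumerator_bent_paraboloid hψ hψ']
  have form_nonneg (a b : ℝ) : 0 ≤ 6 * a ^ 2 + 5 * a * b + 2 * b ^ 2 := by
    linarith [sq_nonneg (5 * a + 4 * b), sq_nonneg a]
  have four_sub_sq_pos : 0 < 4 - ψ u ^ 2 := by nlinarith
  have concave_nonpos : cosh u ^ 2 * (ψ u * deriv (deriv ψ) u) ≤ 0 :=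
    mul_nonpos_of_nonneg_of_nonpos (sq_nonneg _)
      (mul_nonpos_of_nonneg_of_nonpos hψ_nonneg hψ_conc)
  refine mul_pos (mul_pos (by norm_num) (pow_pos (cosh_pos u) 3)) ?_
  linarith [form_nonneg (sinh u * ψ u) (cosh u * deriv ψ u)]

/-- The bent paraboloidal neck (the scalar-flat neck `(r(u), z(u)) =
(2cosh²u, 4sinh u)` deformed by a decreasing concave factor `ψ` with values in
`(0,1)`) is mean convex: `ρ(ρ'z'' - ρ''z') + 2z'(ρ'² + z'²) > 0` for `ρ = r·ψ`. -/
theorem bent_paraboloid_mean_convex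
    (I : Set ℝ) (hIint : I.OrdConnected) (hIpos : I ⊆ Ioi 0) (ψ : ℝ → ℝ)
    (hψ : ∀ u ∈ I, DifferentiableAt ℝ ψ u)
    (hψ' : ∀ u ∈ I, DifferentiableAt ℝ (deriv ψ) u)
    (hψpos : ∀ u ∈ I, 0 < ψ u)
    (hψlt : ∀ u ∈ I, ψ u < 1)
    (hψdec : ∀ u ∈ I, deriv ψ u < 0)
    (hψconc : ∀ u ∈ I, deriv (deriv ψ) u < 0) :
    ∀ u ∈ I,
      0 < ((2 * Real.cosh u ^ 2) * ψ u) *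
            (deriv (fun w => 2 * Real.cosh w ^ 2 * ψ w) u
                * deriv (deriv (fun w => 4 * Real.sinh w)) u
              - deriv (deriv (fun w => 2 * Real.cosh w ^ 2 * ψ w)) u
                * deriv (fun w => 4 * Real.sinh w) u)
          + 2 * deriv (fun w => 4 * Real.sinh w) u *
              ((deriv (fun w => 2 * Real.cosh w ^ 2 * ψ w) u) ^ 2
                + (deriv (fun w => 4 * Real.sinh w) u) ^ 2) := by
  intro u hu
  have hψ_near := eventually_differentiableAt_of_deriv_ne_zero (hψ' u hu).continuousAt
    (hψdec u hu).ne
  exact bent_paraboloid_mean_convex_general hψ_near (hψ' u hu) (hψpos u hu).le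
    ((hψlt u hu).trans one_lt_two) (hψconc u hu).le
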